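/- Let N₁, N₂, m, r be positive integers and let γ ≥ 1 be a real number. Set s := 100·γ⁴·r and t := 800·γ¹²·s, and assume t + s + r ≤ min{N₁, N₂}. Suppose the linear map 𝓐 : ℝ^{N₁×N₂} → ℝ^m satisfies the modified rank-restricted isometry property of order t + s + r with constants 0 < α ≤ β such that β/α ≤ γ. Let X ∈ ℝ^{N₁×N₂} with rank(X) ≤ r, let e ∈ ℝ^m, and let y := 𝓐(X) + e. Let X_c ∈ ℝ^{N₁×N₂} with rank(X_c) ≤ s, let W be a best rank-t approximation of 𝓐*(sgn(y − 𝓐(X_c))), set μ := ‖y − 𝓐(X_c)‖₁ / max{‖W‖_F², (1/(4γ²))·‖𝓐(W)‖₁²/‖W‖_F²} if W ≠ 0 and μ := 0 otherwise, and let X' be a best rank-s approximation of X_c + μ·W. Then ‖X − X'‖_F ≤ ρ·‖X − X_c‖_F + d'·‖e‖₁, where ρ := 1 − (3 − 2√2)/(10·γ²), ρ' := 1 + √(8r/(s+r)), and d' := 96·ρ'·γ⁸/β. -/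

import Mathlib

noncomputable def frobNorm {N₁ N₂ : ℕ} (Z : Matrix (Fin N₁) (Fin N₂) ℝ) : ℝ :=
  Real.sqrt (∑ i, ∑ j, (Z i j) ^ 2)

def frobInner {N₁ N₂ : ℕ} (A B : Matrix (Fin N₁) (Fin N₂) ℝ) : ℝ :=
  ∑ i, ∑ j, A i j * B i j

def l1norm {m : ℕ} (v : Fin m → ℝ) : ℝ := ∑ i, |v i|

noncomputable def sgnVec {m : ℕ} (v : Fin m → ℝ) : Fin m → ℝ := fun i => Real.sign (v i)

def IsBestRankApprox {N₁ N₂ : ℕ} (k : ℕ) (Z H : Matrix (Fin N₁) (Fin N₂) ℝ) : Prop :=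
  H.rank ≤ k ∧
    ∀ W : Matrix (Fin N₁) (Fin N₂) ℝ, W.rank ≤ k → frobNorm (Z - H) ≤ frobNorm (Z - W)
open scoped Classical

/-!
Write `Z = X - Xc`, `v = y - 𝓐 Xc = 𝓐 Z + e` and `G = 𝓐* (sgn v)`.

A best rank-`k` approximation `H` of `V` is recognised by competitors alone, without a singular
value decomposition: moving `H` along `H * Q` gives `V - H ⊥ H * Q`, and trading a row direction of
`H` for a unit vector `b` gives `‖(V - H) b‖ ≤ ‖H c‖` for every unit vector `c` in the row space of
`H`. Averaging over orthonormal `c` annihilated by a matrix `Y` of rank well below `k` shows that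
the operator norm of `V - H` is smaller than `‖Y - H‖_F` by a factor of order `√k`.

Applied to `W` with `Y = 0`, this makes `⟨G - W, Z⟩` negligible, so `⟨W, Z⟩` is nearly
`⟨G, Z⟩ ≥ ‖v‖₁ - ‖e‖₁`, and the step `Z - μ W` contracts: expanding the square works if `e` is small
compared with `𝓐 Z`, and otherwise the triangle inequality bounds everything by `‖e‖₁`. Applied to
`X'` with `Y = X`, it shows that truncation to rank `s` inflates the error by a factor of at most
`1 + 1 / (8 γ²)`.
-/

section RankApproximation

open Matrix
open scoped Matrix.Norms.L2Operator

section Frobenius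

variable {m n l : ℕ}

/-- The entries of a matrix as a Euclidean vector, an isometry that carries `frobInner` and
`frobNorm` to Mathlib's inner product and norm. -/
noncomputable def frobVec :
    Matrix (Fin m) (Fin n) ℝ ≃ₗ[ℝ] EuclideanSpace ℝ (Fin m × Fin n) :=
  (LinearEquiv.curry ℝ ℝ (Fin m) (Fin n)).symm ≪≫ₗ (WithLp.linearEquiv 2 ℝ _).symm

@[simp]
lemma frobVec_apply (Z : Matrix (Fin m) (Fin n) ℝ) (p : Fin m × Fin n) :
    (frobVec Z).ofLp p = Z p.1 p.2 :=
  rfl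

lemma inner_frobVec (Y Z : Matrix (Fin m) (Fin n) ℝ) :
    inner ℝ (frobVec Y) (frobVec Z) = frobInner Y Z := by
  simp [frobInner, PiLp.inner_apply, Fintype.sum_prod_type, mul_comm]

lemma norm_frobVec (Z : Matrix (Fin m) (Fin n) ℝ) : ‖frobVec Z‖ = frobNorm Z := by
  simp [frobNorm, EuclideanSpace.norm_eq, Fintype.sum_prod_type]

lemma frobNorm_nonneg (Z : Matrix (Fin m) (Fin n) ℝ) : 0 ≤ frobNorm Z :=
  Real.sqrt_nonneg _

lemma frobNorm_pos {Z : Matrix (Fin m) (Fin n) ℝ} (hZ : Z ≠ 0) : 0 < frobNorm Z := by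
  rwa [← norm_frobVec, norm_pos_iff, ne_eq, map_eq_zero_iff _ frobVec.injective]

lemma frobNorm_sq (Z : Matrix (Fin m) (Fin n) ℝ) : frobNorm Z ^ 2 = frobInner Z Z := by
  rw [← norm_frobVec, ← inner_frobVec, real_inner_self_eq_norm_sq]

lemma frobNorm_sub_le (Y Z : Matrix (Fin m) (Fin n) ℝ) :
    frobNorm (Y - Z) ≤ frobNorm Y + frobNorm Z := by
  simpa only [← norm_frobVec, map_sub] using norm_sub_le (frobVec Y) (frobVec Z)

lemma frobNorm_sub_rev (Y Z : Matrix (Fin m) (Fin n) ℝ) :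
    frobNorm (Y - Z) = frobNorm (Z - Y) := by
  simpa only [← norm_frobVec, map_sub] using norm_sub_rev (frobVec Y) (frobVec Z)

lemma frobNorm_smul (c : ℝ) (Z : Matrix (Fin m) (Fin n) ℝ) :
    frobNorm (c • Z) = |c| * frobNorm Z := by
  simp only [← norm_frobVec, map_smul, norm_smul, Real.norm_eq_abs]

lemma frobNorm_sub_sq (Y Z : Matrix (Fin m) (Fin n) ℝ) :
    frobNorm (Y - Z) ^ 2 = frobNorm Y ^ 2 - 2 * frobInner Y Z + frobNorm Z ^ 2 := by
  simpa only [← norm_frobVec, ← inner_frobVec, map_sub] using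
    norm_sub_sq_real (frobVec Y) (frobVec Z)

lemma frobInner_comm (Y Z : Matrix (Fin m) (Fin n) ℝ) : frobInner Y Z = frobInner Z Y := by
  simp only [← inner_frobVec, real_inner_comm]

lemma frobInner_sub_left (Y₁ Y₂ Z : Matrix (Fin m) (Fin n) ℝ) :
    frobInner (Y₁ - Y₂) Z = frobInner Y₁ Z - frobInner Y₂ Z := by
  simp only [← inner_frobVec, map_sub, inner_sub_left]

lemma frobInner_sub_right (Y Z₁ Z₂ : Matrix (Fin m) (Fin n) ℝ) :
    frobInner Y (Z₁ - Z₂) = frobInner Y Z₁ - frobInner Y Z₂ := by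
  simp only [← inner_frobVec, map_sub, inner_sub_right]

lemma frobInner_smul_right (c : ℝ) (Y Z : Matrix (Fin m) (Fin n) ℝ) :
    frobInner Y (c • Z) = c * frobInner Y Z := by
  simp only [← inner_frobVec, map_smul, real_inner_smul_right]

lemma sq_frobInner_le (Y Z : Matrix (Fin m) (Fin n) ℝ) :
    frobInner Y Z ^ 2 ≤ frobNorm Y ^ 2 * frobNorm Z ^ 2 := by
  simpa only [← norm_frobVec, ← inner_frobVec, mul_pow, sq_abs] using
    pow_le_pow_left₀ (abs_nonneg _) (abs_real_inner_le_norm (frobVec Y) (frobVec Z)) 2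

lemma frobInner_eq_trace (Y Z : Matrix (Fin m) (Fin n) ℝ) : frobInner Y Z = (Yᵀ * Z).trace := by
  simp only [frobInner, trace, diag_apply, mul_apply, transpose_apply]
  exact Finset.sum_comm

lemma frobInner_mul_left (Y : Matrix (Fin m) (Fin n) ℝ) (Q : Matrix (Fin n) (Fin l) ℝ)
    (Z : Matrix (Fin m) (Fin l) ℝ) : frobInner (Y * Q) Z = frobInner Y (Z * Qᵀ) := by
  rw [frobInner_eq_trace, frobInner_eq_trace, transpose_mul, Matrix.mul_assoc, trace_mul_comm,
    Matrix.mul_assoc]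

lemma frobNorm_mul_le_of_transpose_mul_self (M : Matrix (Fin m) (Fin n) ℝ)
    {C : Matrix (Fin n) (Fin l) ℝ} (hC : Cᵀ * C = 1) : frobNorm (M * C) ≤ frobNorm M := by
  have hinner : frobInner M (M * C * Cᵀ) = frobNorm (M * C) ^ 2 := by
    rw [← frobInner_mul_left, frobNorm_sq]
  have hproj : frobNorm (M * C * Cᵀ) ^ 2 = frobNorm (M * C) ^ 2 := by
    rw [frobNorm_sq, frobInner_mul_left, transpose_transpose, Matrix.mul_assoc _ Cᵀ, hC,
      Matrix.mul_one, frobNorm_sq]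
  have hpyth := frobNorm_sub_sq M (M * C * Cᵀ)
  rw [hinner, hproj] at hpyth
  refine le_of_sq_le_sq ?_ (frobNorm_nonneg M)
  linarith [sq_nonneg (frobNorm (M - M * C * Cᵀ))]

lemma frobNorm_sq_eq_sum_col (Z : Matrix (Fin m) (Fin n) ℝ) :
    frobNorm Z ^ 2 = ∑ j, ‖WithLp.toLp 2 (Z.col j)‖ ^ 2 := by
  rw [frobNorm_sq]
  simp only [frobInner, EuclideanSpace.norm_sq_eq, col_apply, Real.norm_eq_abs, sq_abs, ← sq]
  exact Finset.sum_comm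

lemma mul_sq_le_frobNorm_sq {Z : Matrix (Fin m) (Fin n) ℝ} {a : ℝ} (ha : 0 ≤ a)
    (hZ : ∀ j, a ≤ ‖WithLp.toLp 2 (Z.col j)‖) : n * a ^ 2 ≤ frobNorm Z ^ 2 := by
  have hcard := Finset.card_nsmul_le_sum Finset.univ (fun j => ‖WithLp.toLp 2 (Z.col j)‖ ^ 2)
    (a ^ 2) fun j _ => pow_le_pow_left₀ ha (hZ j) 2
  rwa [Finset.card_univ, Fintype.card_fin, nsmul_eq_mul, ← frobNorm_sq_eq_sum_col] at hcard

lemma frobNorm_sq_mul_le (D : Matrix (Fin m) (Fin n) ℝ) (C : Matrix (Fin n) (Fin l) ℝ) :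
    frobNorm (D * C) ^ 2 ≤ ‖D‖ ^ 2 * frobNorm C ^ 2 := by
  rw [frobNorm_sq_eq_sum_col, frobNorm_sq_eq_sum_col, Finset.mul_sum]
  refine Finset.sum_le_sum fun j _ => ?_
  rw [← mul_pow]
  exact pow_le_pow_left₀ (norm_nonneg _) (l2_opNorm_mulVec D (WithLp.toLp 2 (C.col j))) 2

lemma frobNorm_vecMulVec (a : EuclideanSpace ℝ (Fin m)) (b : EuclideanSpace ℝ (Fin n)) :
    frobNorm (vecMulVec a.ofLp b.ofLp) = ‖a‖ * ‖b‖ := by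
  rw [EuclideanSpace.norm_eq, EuclideanSpace.norm_eq, ← Real.sqrt_mul (by positivity),
    Finset.sum_mul_sum]
  simp only [frobNorm, vecMulVec_apply, mul_pow, Real.norm_eq_abs, sq_abs]

lemma norm_col_of_transpose_mul_self {C : Matrix (Fin m) (Fin n) ℝ} (hC : Cᵀ * C = 1)
    (j : Fin n) : ‖WithLp.toLp 2 (C.col j)‖ = 1 := by
  have hjj : (Cᵀ * C) j j = 1 := by rw [hC, one_apply_eq]
  rw [← pow_eq_one_iff_of_nonneg (norm_nonneg _) two_ne_zero, EuclideanSpace.norm_sq_eq, ← hjj]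
  simp only [col_apply, Real.norm_eq_abs, sq_abs, mul_apply, transpose_apply, ← sq]

lemma frobNorm_sq_of_transpose_mul_self {C : Matrix (Fin m) (Fin n) ℝ} (hC : Cᵀ * C = 1) :
    frobNorm C ^ 2 = n := by
  simp only [frobNorm_sq_eq_sum_col, norm_col_of_transpose_mul_self hC, one_pow,
    Finset.sum_const, Finset.card_univ, Fintype.card_fin, nsmul_eq_mul, mul_one]

end Frobenius

section RowSpace

lemma matrix_rank_add_le {K m n : Type*} [Field K] [Fintype n] (A B : Matrix m n K) :
    (A + B).rank ≤ A.rank + B.rank := by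
  rw [Matrix.rank, mulVecLin_add]
  exact (Submodule.finrank_mono (LinearMap.range_add_le _ _)).trans
    (Submodule.finrank_add_le_finrank_add_finrank _ _)

lemma matrix_rank_sub_le {K m n : Type*} [Field K] [Fintype n] (A B : Matrix m n K) :
    (A - B).rank ≤ A.rank + B.rank := by
  have hneg : (-B).mulVecLin = -B.mulVecLin := by
    ext v
    simp only [mulVecLin_apply, LinearMap.neg_apply, neg_mulVec, LinearMap.comp_apply]
  have hrank : (-B).rank = B.rank := by
    rw [Matrix.rank, hneg, LinearMap.range_neg, Matrix.rank]
  rw [sub_eq_add_neg, ← hrank]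
  exact matrix_rank_add_le A (-B)

variable {m n : ℕ}

lemma exists_orthonormal_columns (K : Submodule ℝ (EuclideanSpace ℝ (Fin n))) :
    ∃ C : Matrix (Fin n) (Fin (Module.finrank ℝ K)) ℝ, Cᵀ * C = 1 ∧
      (∀ j, WithLp.toLp 2 (C.col j) ∈ K) ∧ ∀ v ∈ K, (C * Cᵀ) *ᵥ v.ofLp = v.ofLp := by
  let b := stdOrthonormalBasis ℝ K
  refine ⟨.of fun i j => (b j).1 i, ?_, fun j => (b j).2, fun v hv => ?_⟩
  · ext j k
    have hjk := orthonormal_iff_ite.mp b.orthonormal k j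
    simp only [Submodule.coe_inner, PiLp.inner_apply, RCLike.inner_apply, conj_trivial] at hjk
    simpa only [mul_apply, transpose_apply, of_apply, one_apply, eq_comm (a := k)] using hjk
  · have hsum := congrArg (fun u : K => u.1.ofLp) (b.sum_repr' ⟨v, hv⟩)
    ext i
    have hi := congrFun hsum i
    simp only [Submodule.coe_sum, Submodule.coe_smul, WithLp.ofLp_sum, Finset.sum_apply,
      WithLp.ofLp_smul, Pi.smul_apply, smul_eq_mul, Submodule.coe_inner, PiLp.inner_apply,
      RCLike.inner_apply, conj_trivial] at hi
    rw [← mulVec_mulVec]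
    simpa only [mulVec, dotProduct, transpose_apply, of_apply, mul_comm] using hi

/-- The row space of a real matrix, encoded as the orthogonal complement of its null space. -/
noncomputable def rowSpace (Z : Matrix (Fin m) (Fin n) ℝ) :
    Submodule ℝ (EuclideanSpace ℝ (Fin n)) :=
  (LinearMap.ker (toEuclideanLin Z))ᗮ

lemma rank_add_finrank_ker (Z : Matrix (Fin m) (Fin n) ℝ) :
    Z.rank + Module.finrank ℝ (LinearMap.ker (toEuclideanLin Z)) = n := by
  rw [rank_eq_finrank_range_toLin Z (PiLp.basisFun 2 ℝ (Fin m)) (PiLp.basisFun 2 ℝ (Fin n)),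
    ← toLpLin_eq_toLin,
    LinearMap.finrank_range_add_finrank_ker, finrank_euclideanSpace_fin]

lemma finrank_rowSpace (Z : Matrix (Fin m) (Fin n) ℝ) :
    Module.finrank ℝ (rowSpace Z) = Z.rank := by
  have hker := rank_add_finrank_ker Z
  have horth := (LinearMap.ker (toEuclideanLin Z)).finrank_add_finrank_orthogonal
  rw [finrank_euclideanSpace_fin] at horth
  rw [rowSpace]
  omega

lemma row_mem_rowSpace (Z : Matrix (Fin m) (Fin n) ℝ) (i : Fin m) :
    WithLp.toLp 2 (Z i) ∈ rowSpace Z := by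
  refine (Submodule.mem_orthogonal' _ _).mpr fun v hv => ?_
  have hi : (Z *ᵥ v.ofLp) i = 0 :=
    congrFun (congrArg WithLp.ofLp (LinearMap.mem_ker.mp hv)) i
  simpa only [PiLp.inner_apply, RCLike.inner_apply, conj_trivial, mulVec, dotProduct,
    mul_comm] using hi

lemma exists_mul_mul_transpose_eq (Z : Matrix (Fin m) (Fin n) ℝ) :
    ∃ C : Matrix (Fin n) (Fin Z.rank) ℝ, Cᵀ * C = 1 ∧ Z * C * Cᵀ = Z := by
  rw [← finrank_rowSpace Z]
  obtain ⟨C, hC, -, hproj⟩ := exists_orthonormal_columns (rowSpace Z)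
  refine ⟨C, hC, ?_⟩
  have hrows : C * Cᵀ * Zᵀ = Zᵀ := by
    ext j i
    exact congrFun (hproj _ (row_mem_rowSpace Z i)) j
  simpa only [transpose_mul, transpose_transpose, Matrix.mul_assoc] using congrArg transpose hrows

lemma rank_le_finrank_rowSpace_inf_ker_add_rank (H X : Matrix (Fin m) (Fin n) ℝ) :
    H.rank ≤
      Module.finrank ℝ ↥(rowSpace H ⊓ LinearMap.ker (toEuclideanLin X)) + X.rank := by
  have hsum := Submodule.finrank_sup_add_finrank_inf_eq (rowSpace H)
    (LinearMap.ker (toEuclideanLin X))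
  have hsup := Submodule.finrank_le (rowSpace H ⊔ LinearMap.ker (toEuclideanLin X))
  have hker := rank_add_finrank_ker X
  rw [finrank_rowSpace] at hsum
  rw [finrank_euclideanSpace_fin] at hsup
  omega

lemma exists_orthonormal_columns_mul_eq_zero (H X : Matrix (Fin m) (Fin n) ℝ) :
    ∃ (d : ℕ) (C : Matrix (Fin n) (Fin d) ℝ), H.rank ≤ d + X.rank ∧ Cᵀ * C = 1 ∧
      (∀ j, WithLp.toLp 2 (C.col j) ∈ rowSpace H) ∧ X * C = 0 := by
  obtain ⟨C, hC, hmem, -⟩ :=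
    exists_orthonormal_columns (rowSpace H ⊓ LinearMap.ker (toEuclideanLin X))
  refine ⟨_, C, rank_le_finrank_rowSpace_inf_ker_add_rank H X, hC, fun j => (hmem j).1, ?_⟩
  ext i j
  exact congrFun (congrArg WithLp.ofLp (LinearMap.mem_ker.mp (hmem j).2)) i

lemma rank_sub_mul_vecMulVec_lt (H : Matrix (Fin m) (Fin n) ℝ) {c : EuclideanSpace ℝ (Fin n)}
    (hc : ‖c‖ = 1) (hcH : c ∈ rowSpace H) :
    (H - H * vecMulVec c.ofLp c.ofLp).rank < H.rank := by
  have happly (v : EuclideanSpace ℝ (Fin n)) :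
      toEuclideanLin (H - H * vecMulVec c.ofLp c.ofLp) v =
        toEuclideanLin H v - inner ℝ c v • toEuclideanLin H c := by
    have hinner : c.ofLp ⬝ᵥ v.ofLp = inner ℝ c v := by
      simp only [PiLp.inner_apply, RCLike.inner_apply, conj_trivial, dotProduct, mul_comm]
    simp only [map_sub, LinearMap.sub_apply, toLpLin_apply, mul_vecMulVec, vecMulVec_mulVec,
      hinner, op_smul_eq_smul, WithLp.toLp_smul]
  have hlt : LinearMap.ker (toEuclideanLin H) <
      LinearMap.ker (toEuclideanLin (H - H * vecMulVec c.ofLp c.ofLp)) := by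
    refine SetLike.lt_iff_le_and_exists.mpr ⟨fun v hv => ?_, c, ?_, fun hker => ?_⟩
    · have hortho : inner ℝ c v = 0 := (Submodule.mem_orthogonal' _ _).mp hcH v hv
      rw [LinearMap.mem_ker, happly, hortho, LinearMap.mem_ker.mp hv, zero_smul, sub_zero]
    · rw [LinearMap.mem_ker, happly, real_inner_self_eq_norm_sq, hc, one_pow, one_smul, sub_self]
    · have hself := (Submodule.mem_orthogonal' _ _).mp hcH c hker
      rw [real_inner_self_eq_norm_sq, hc] at hself
      norm_num at hself
  have hfin := Submodule.finrank_lt_finrank_of_lt hlt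
  have hH := rank_add_finrank_ker H
  have hH' := rank_add_finrank_ker (H - H * vecMulVec c.ofLp c.ofLp)
  omega

end RowSpace

section BestRankApprox

variable {m n k : ℕ} {V H : Matrix (Fin m) (Fin n) ℝ}

lemma sq_frobInner_le_rank_mul (D M Z : Matrix (Fin m) (Fin n) ℝ)
    (hDM : ∀ Q : Matrix (Fin n) (Fin n) ℝ, frobInner D (M * Q) = 0) :
    frobInner D Z ^ 2 ≤ Z.rank * ‖D‖ ^ 2 * frobNorm (Z - M) ^ 2 := by
  obtain ⟨C, hC, hZC⟩ := exists_mul_mul_transpose_eq Z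
  have hcompress : frobInner D Z = frobInner (D * C) ((Z - M) * C) := by
    rw [frobInner_mul_left, Matrix.sub_mul, Matrix.sub_mul, hZC, frobInner_sub_right,
      Matrix.mul_assoc M, hDM, sub_zero]
  calc frobInner D Z ^ 2
      ≤ frobNorm (D * C) ^ 2 * frobNorm ((Z - M) * C) ^ 2 := by
        rw [hcompress]
        exact sq_frobInner_le _ _
    _ ≤ ‖D‖ ^ 2 * frobNorm C ^ 2 * frobNorm (Z - M) ^ 2 := by
        gcongr
        · exact frobNorm_sq_mul_le D C
        · exact frobNorm_nonneg _
        · exact frobNorm_mul_le_of_transpose_mul_self _ hC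
    _ = Z.rank * ‖D‖ ^ 2 * frobNorm (Z - M) ^ 2 := by
        rw [frobNorm_sq_of_transpose_mul_self hC, mul_comm (‖D‖ ^ 2)]

lemma le_mul_of_sq_le_add_two_mul {a b q r k γ : ℝ} (hb : 0 ≤ b) (hr : 0 < r) (hγ : 1 ≤ γ)
    (hk : 100 * γ ^ 4 * r ≤ k) (hq : (k - r) * q ^ 2 ≤ r * (a ^ 2) ^ 2)
    (ha : a ^ 2 ≤ b ^ 2 + 2 * q) : a ≤ (1 + 1 / (8 * γ ^ 2)) * b := by
  have hγ4 : 1 ≤ γ ^ 4 := one_le_pow₀ hγ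
  have hq4 : (99 / 10 * γ ^ 2 * q) ^ 2 ≤ (a ^ 2) ^ 2 := by
    have hgap : 99 * γ ^ 4 * r ≤ k - r := by nlinarith
    refine le_of_mul_le_mul_left ?_ hr
    calc r * (99 / 10 * γ ^ 2 * q) ^ 2 ≤ 99 * γ ^ 4 * r * q ^ 2 := by
          nlinarith [show 0 ≤ γ ^ 4 * r * q ^ 2 by positivity]
      _ ≤ (k - r) * q ^ 2 := by gcongr
      _ ≤ r * (a ^ 2) ^ 2 := hq
  have hq2 : 99 / 10 * γ ^ 2 * q ≤ a ^ 2 := le_of_sq_le_sq hq4 (sq_nonneg a)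
  obtain ⟨x, hx⟩ : ∃ x, x = 1 / γ ^ 2 := ⟨_, rfl⟩
  have hx0 : 0 ≤ x := by rw [hx]; positivity
  have hx1 : x ≤ 1 := by
    rw [hx]
    exact div_le_one_of_le₀ (one_le_pow₀ hγ) (by positivity)
  have hqx : q ≤ 10 / 99 * x * a ^ 2 := by
    rw [hx, mul_one_div, div_mul_eq_mul_div, le_div_iff₀ (by positivity)]
    linarith
  have hax : a ^ 2 * (1 - 20 / 99 * x) ≤ b ^ 2 := by linarith
  have hone : 1 ≤ (1 + x / 8) ^ 2 * (1 - 20 / 99 * x) := by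
    nlinarith [mul_nonneg hx0 (sub_nonneg.mpr hx1),
      mul_nonneg (mul_nonneg hx0 hx0) (sub_nonneg.mpr hx1)]
  have hfac : 1 + 1 / (8 * γ ^ 2) = 1 + x / 8 := by rw [hx]; ring
  rw [hfac]
  refine le_of_sq_le_sq ?_ (by positivity)
  calc a ^ 2 ≤ a ^ 2 * ((1 + x / 8) ^ 2 * (1 - 20 / 99 * x)) :=
        le_mul_of_one_le_right (sq_nonneg a) hone
    _ = (1 + x / 8) ^ 2 * (a ^ 2 * (1 - 20 / 99 * x)) := by ring
    _ ≤ ((1 + x / 8) * b) ^ 2 := by rw [mul_pow]; gcongr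

namespace IsBestRankApprox

lemma two_mul_frobInner_le (hH : IsBestRankApprox k V H) {E : Matrix (Fin m) (Fin n) ℝ}
    (hE : (H + E).rank ≤ k) : 2 * frobInner (V - H) E ≤ frobNorm E ^ 2 := by
  have hle := pow_le_pow_left₀ (frobNorm_nonneg _) (hH.2 _ hE) 2
  rw [← sub_sub, frobNorm_sub_sq (V - H)] at hle
  linarith

-- `H` can be perturbed to `H * (1 + c • Q)` for all real `c` without raising its rank.
lemma frobInner_sub_mul_eq_zero (hH : IsBestRankApprox k V H) (Q : Matrix (Fin n) (Fin n) ℝ) :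
    frobInner (V - H) (H * Q) = 0 := by
  have hquad (c : ℝ) :
      0 ≤ frobNorm (H * Q) ^ 2 * (c * c) + (-2 * frobInner (V - H) (H * Q)) * c + 0 := by
    have hrank : (H + c • (H * Q)).rank ≤ k := by
      have hfactor : H + c • (H * Q) = H * (1 + c • Q) := by
        rw [Matrix.mul_add, Matrix.mul_one, Matrix.mul_smul]
      rw [hfactor]
      exact (rank_mul_le_left H _).trans hH.1
    have hle := hH.two_mul_frobInner_le hrank
    rw [frobInner_smul_right, frobNorm_smul, mul_pow, sq_abs] at hle
    linarith
  have hdiscrim := discrim_le_zero hquad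
  rw [discrim] at hdiscrim
  exact pow_eq_zero_iff two_ne_zero |>.mp (by nlinarith)

lemma frobInner_eq_frobNorm_sq (hH : IsBestRankApprox k V H) :
    frobInner V H = frobNorm H ^ 2 := by
  have hortho := hH.frobInner_sub_mul_eq_zero 1
  rw [Matrix.mul_one, frobInner_sub_left, ← frobNorm_sq] at hortho
  linarith

-- The competitor is `H - H * Q + (V - H) * P`; the cross terms vanish by first-order optimality.
lemma frobNorm_sub_mul_le (hH : IsBestRankApprox k V H) {P Q : Matrix (Fin n) (Fin n) ℝ}
    (hP : P * Pᵀ = P) (hrank : (H - H * Q).rank + P.rank ≤ k) :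
    frobNorm ((V - H) * P) ≤ frobNorm (H * Q) := by
  have hle := hH.two_mul_frobInner_le (E := (V - H) * P - H * Q) <| calc
    (H + ((V - H) * P - H * Q)).rank = (H - H * Q + (V - H) * P).rank := by congr 1; abel
    _ ≤ (H - H * Q).rank + ((V - H) * P).rank := matrix_rank_add_le _ _
    _ ≤ (H - H * Q).rank + P.rank := by gcongr; exact rank_mul_le_right _ _
    _ ≤ k := hrank
  have hself : frobInner (V - H) ((V - H) * P) = frobNorm ((V - H) * P) ^ 2 := by
    rw [frobNorm_sq, frobInner_mul_left, Matrix.mul_assoc, hP]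
  have hcross : frobInner ((V - H) * P) (H * Q) = 0 := by
    rw [frobInner_mul_left, Matrix.mul_assoc, hH.frobInner_sub_mul_eq_zero]
  rw [frobInner_sub_right, hself, hH.frobInner_sub_mul_eq_zero, frobNorm_sub_sq, hcross] at hle
  exact le_of_sq_le_sq (by linarith) (frobNorm_nonneg _)

lemma l2_opNorm_sub_le (hH : IsBestRankApprox k V H) {Q : Matrix (Fin n) (Fin n) ℝ}
    (hQ : (H - H * Q).rank < k) : ‖V - H‖ ≤ frobNorm (H * Q) := by
  rw [l2_opNorm_def]
  refine ContinuousLinearMap.opNorm_le_of_unit_norm (frobNorm_nonneg _) fun b hb => ?_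
  let P := vecMulVec b.ofLp b.ofLp
  have hbb : b.ofLp ⬝ᵥ b.ofLp = 1 := by
    rw [← one_pow 2, ← hb, EuclideanSpace.norm_sq_eq]
    simp only [dotProduct, Real.norm_eq_abs, sq_abs, ← sq]
  have hP : P * Pᵀ = P := by
    simp only [P, transpose_vecMulVec, vecMulVec_mul_vecMulVec, hbb, one_smul]
  have hPrank : (H - H * Q).rank + P.rank ≤ k :=
    (Nat.add_le_add_left (rank_vecMulVec_le _ _) _).trans hQ
  have hle := hH.frobNorm_sub_mul_le hP hPrank
  rwa [mul_vecMulVec, ← WithLp.ofLp_toLp 2 ((V - H) *ᵥ b.ofLp), frobNorm_vecMulVec, hb,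
    mul_one] at hle

lemma l2_opNorm_sub_le_norm_mulVec (hH : IsBestRankApprox k V H)
    {c : EuclideanSpace ℝ (Fin n)} (hc : ‖c‖ = 1) (hcH : c ∈ rowSpace H) :
    ‖V - H‖ ≤ ‖WithLp.toLp 2 (H *ᵥ c.ofLp)‖ := by
  have hle := hH.l2_opNorm_sub_le ((rank_sub_mul_vecMulVec_lt H hc hcH).trans_le hH.1)
  rwa [mul_vecMulVec, ← WithLp.ofLp_toLp 2 (H *ᵥ c.ofLp), frobNorm_vecMulVec, hc,
    mul_one] at hle

lemma l2_opNorm_sub_eq_zero (hH : IsBestRankApprox k V H) (hlt : H.rank < k) :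
    ‖V - H‖ = 0 := by
  have hle := hH.l2_opNorm_sub_le (Q := 0) (by rwa [Matrix.mul_zero, sub_zero])
  exact le_antisymm (by simpa [frobNorm] using hle) (norm_nonneg _)

lemma sub_rank_mul_sq_l2_opNorm_le (hH : IsBestRankApprox k V H)
    (X : Matrix (Fin m) (Fin n) ℝ) :
    (k - X.rank) * ‖V - H‖ ^ 2 ≤ frobNorm (X - H) ^ 2 := by
  rcases hH.1.lt_or_eq with hlt | heq
  · rw [hH.l2_opNorm_sub_eq_zero hlt, zero_pow two_ne_zero, mul_zero]
    exact sq_nonneg _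
  obtain ⟨d, C, hdim, hC, hCH, hXC⟩ := exists_orthonormal_columns_mul_eq_zero H X
  rw [heq, ← Nat.cast_le (α := ℝ), Nat.cast_add] at hdim
  have hcol (j : Fin d) : ‖V - H‖ ≤ ‖WithLp.toLp 2 ((H * C).col j)‖ := by
    have hmul : (H * C).col j = H *ᵥ C.col j := rfl
    rw [hmul]
    exact hH.l2_opNorm_sub_le_norm_mulVec (norm_col_of_transpose_mul_self hC j) (hCH j)
  have hHC : frobNorm (H * C) ≤ frobNorm (X - H) := by
    have hle := frobNorm_mul_le_of_transpose_mul_self (H - X) hC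
    rwa [Matrix.sub_mul, hXC, sub_zero, frobNorm_sub_rev] at hle
  calc (k - X.rank) * ‖V - H‖ ^ 2
      ≤ d * ‖V - H‖ ^ 2 := by gcongr; linarith
    _ ≤ frobNorm (H * C) ^ 2 := mul_sq_le_frobNorm_sq (norm_nonneg _) hcol
    _ ≤ frobNorm (X - H) ^ 2 := by gcongr; exact frobNorm_nonneg _

lemma sub_rank_mul_sq_frobInner_le (hH : IsBestRankApprox k V H)
    (X M Z : Matrix (Fin m) (Fin n) ℝ) (hX : X.rank ≤ k)
    (hM : ∀ Q : Matrix (Fin n) (Fin n) ℝ, frobInner (V - H) (M * Q) = 0) :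
    (k - X.rank) * frobInner (V - H) Z ^ 2 ≤
      Z.rank * frobNorm (X - H) ^ 2 * frobNorm (Z - M) ^ 2 := by
  have hgap : (0 : ℝ) ≤ k - X.rank := sub_nonneg.mpr (Nat.cast_le.mpr hX)
  calc (k - X.rank) * frobInner (V - H) Z ^ 2
      ≤ (k - X.rank) * (Z.rank * ‖V - H‖ ^ 2 * frobNorm (Z - M) ^ 2) := by
        gcongr
        exact sq_frobInner_le_rank_mul _ _ _ hM
    _ = Z.rank * ((k - X.rank) * ‖V - H‖ ^ 2) * frobNorm (Z - M) ^ 2 := by ring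
    _ ≤ Z.rank * frobNorm (X - H) ^ 2 * frobNorm (Z - M) ^ 2 := by
        gcongr
        exact hH.sub_rank_mul_sq_l2_opNorm_le X

lemma mul_sq_frobInner_sub_le (hH : IsBestRankApprox k V H) (Z : Matrix (Fin m) (Fin n) ℝ) :
    k * frobInner (V - H) Z ^ 2 ≤ Z.rank * frobNorm H ^ 2 * frobNorm Z ^ 2 := by
  have hle := hH.sub_rank_mul_sq_frobInner_le 0 0 Z (rank_zero.trans_le k.zero_le)
    fun Q => by simp [frobInner]
  rwa [rank_zero, Nat.cast_zero, sub_zero, sub_zero, frobNorm_sub_rev, sub_zero] at hle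

lemma frobNorm_sub_sq_le (hH : IsBestRankApprox k V H) (X : Matrix (Fin m) (Fin n) ℝ) :
    frobNorm (X - H) ^ 2 ≤ frobNorm (X - V) ^ 2 + 2 * frobInner (V - H) X := by
  have hpyth := frobNorm_sub_sq (X - H) (V - H)
  have hcross : frobInner (X - H) (V - H) = frobInner (V - H) X := by
    have hortho := hH.frobInner_sub_mul_eq_zero 1
    rw [Matrix.mul_one] at hortho
    rw [frobInner_comm, frobInner_sub_right, hortho, sub_zero]
  rw [sub_sub_sub_cancel_right, hcross] at hpyth
  linarith [sq_nonneg (frobNorm (V - H))]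

lemma frobNorm_sub_le (hH : IsBestRankApprox k V H) {X : Matrix (Fin m) (Fin n) ℝ} {r : ℕ}
    {γ : ℝ} (hr : 0 < r) (hγ : 1 ≤ γ) (hk : 100 * γ ^ 4 * r ≤ k) (hX : X.rank ≤ r) :
    frobNorm (X - H) ≤ (1 + 1 / (8 * γ ^ 2)) * frobNorm (X - V) := by
  have hXr : (X.rank : ℝ) ≤ r := Nat.cast_le.mpr hX
  have hrk : (r : ℝ) ≤ k := by
    nlinarith [one_le_pow₀ hγ (n := 4), (Nat.cast_nonneg r : (0 : ℝ) ≤ r)]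
  have hcross := hH.sub_rank_mul_sq_frobInner_le X H X (hX.trans (Nat.cast_le.mp hrk))
    hH.frobInner_sub_mul_eq_zero
  refine le_mul_of_sq_le_add_two_mul (frobNorm_nonneg _) (Nat.cast_pos.mpr hr) hγ hk ?_
    (hH.frobNorm_sub_sq_le X)
  calc (k - r) * frobInner (V - H) X ^ 2
      ≤ (k - X.rank) * frobInner (V - H) X ^ 2 := by gcongr
    _ ≤ X.rank * (frobNorm (X - H) ^ 2) ^ 2 := hcross.trans_eq (by ring)
    _ ≤ r * (frobNorm (X - H) ^ 2) ^ 2 := by gcongr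

end IsBestRankApprox

end BestRankApprox

end RankApproximation

section SignPairing

variable {m : ℕ}

lemma l1norm_nonneg (v : Fin m → ℝ) : 0 ≤ l1norm v :=
  Finset.sum_nonneg fun _ _ => abs_nonneg _

lemma l1norm_add_le (v w : Fin m → ℝ) : l1norm (v + w) ≤ l1norm v + l1norm w := by
  rw [l1norm, l1norm, l1norm, ← Finset.sum_add_distrib]
  exact Finset.sum_le_sum fun i _ => abs_add_le (v i) (w i)

lemma l1norm_le_l1norm_add (v w : Fin m → ℝ) : l1norm v ≤ l1norm (v + w) + l1norm w := by
  rw [l1norm, l1norm, l1norm, ← Finset.sum_add_distrib]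
  refine Finset.sum_le_sum fun i _ => ?_
  simpa only [Pi.add_apply, add_sub_cancel_right] using abs_sub (v i + w i) (w i)

lemma sum_sgnVec_mul_le (v w : Fin m → ℝ) : ∑ i, sgnVec v i * w i ≤ l1norm w := by
  refine Finset.sum_le_sum fun i _ => ?_
  rcases Real.sign_apply_eq (v i) with h | h | h <;> rw [sgnVec, h]
  · simpa only [neg_one_mul] using neg_le_abs (w i)
  · simpa only [zero_mul] using abs_nonneg (w i)
  · simpa only [one_mul] using le_abs_self (w i)

lemma sum_sgnVec_mul_self (v : Fin m → ℝ) : ∑ i, sgnVec v i * v i = l1norm v := by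
  refine Finset.sum_congr rfl fun i _ => ?_
  rcases lt_trichotomy (v i) 0 with h | h | h
  · rw [sgnVec, Real.sign_of_neg h, abs_of_neg h, neg_one_mul]
  · rw [h, mul_zero, abs_zero]
  · rw [sgnVec, Real.sign_of_pos h, abs_of_pos h, one_mul]

end SignPairing

section GradientStep

variable {N₁ N₂ m : ℕ} {A : Matrix (Fin N₁) (Fin N₂) ℝ →ₗ[ℝ] (Fin m → ℝ)}
  {Astar : (Fin m → ℝ) →ₗ[ℝ] Matrix (Fin N₁) (Fin N₂) ℝ}

/-- The modified rank-restricted isometry property of order `k` with constants `α` and `β`. -/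
def RankRestrictedIsometry (k : ℕ) (α β : ℝ)
    (A : Matrix (Fin N₁) (Fin N₂) ℝ →ₗ[ℝ] (Fin m → ℝ)) : Prop :=
  ∀ Z : Matrix (Fin N₁) (Fin N₂) ℝ, Z.rank ≤ k →
    α * frobNorm Z ≤ l1norm (A Z) ∧ l1norm (A Z) ≤ β * frobNorm Z

/-- The step size `μ` of the iteration for the residual `v` and the search direction `W`. -/
noncomputable def stepSize (γ : ℝ) (A : Matrix (Fin N₁) (Fin N₂) ℝ →ₗ[ℝ] (Fin m → ℝ))
    (v : Fin m → ℝ) (W : Matrix (Fin N₁) (Fin N₂) ℝ) : ℝ :=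
  if W ≠ 0 then
    l1norm v / max (frobNorm W ^ 2) ((1 / (4 * γ ^ 2)) * l1norm (A W) ^ 2 / frobNorm W ^ 2)
  else 0

lemma stepSize_nonneg (γ : ℝ) (v : Fin m → ℝ) (W : Matrix (Fin N₁) (Fin N₂) ℝ) :
    0 ≤ stepSize γ A v W := by
  rw [stepSize]
  split_ifs
  · exact div_nonneg (l1norm_nonneg v) (le_max_of_le_left (sq_nonneg _))
  · exact le_rfl

lemma stepSize_mul_frobNorm_sq_le (γ : ℝ) (v : Fin m → ℝ) (W : Matrix (Fin N₁) (Fin N₂) ℝ) :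
    stepSize γ A v W * frobNorm W ^ 2 ≤ l1norm v := by
  rw [stepSize]
  split_ifs with hW
  · have hden : 0 < max (frobNorm W ^ 2)
        ((1 / (4 * γ ^ 2)) * l1norm (A W) ^ 2 / frobNorm W ^ 2) :=
      lt_max_of_lt_left (pow_pos (frobNorm_pos hW) 2)
    rw [div_mul_eq_mul_div, div_le_iff₀ hden]
    exact mul_le_mul_of_nonneg_left (le_max_left _ _) (l1norm_nonneg v)
  · rw [zero_mul]
    exact l1norm_nonneg v

lemma stepSize_mul_frobNorm_le {γ α β : ℝ} (hγ : 0 < γ) (hβ : 0 < β) (hβα : β ≤ γ * α)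
    (v : Fin m → ℝ) {W : Matrix (Fin N₁) (Fin N₂) ℝ} (hWβ : frobNorm W ≤ β)
    (hAW : α * frobNorm W ≤ l1norm (A W)) :
    stepSize γ A v W * frobNorm W ≤ 4 * γ ^ 4 * l1norm v / β := by
  rw [stepSize]
  split_ifs with hW
  · have hw := frobNorm_pos hW
    have hden : β ^ 2 / (4 * γ ^ 4) ≤
        (1 / (4 * γ ^ 2)) * l1norm (A W) ^ 2 / frobNorm W ^ 2 := by
      have hle : β * frobNorm W ≤ γ * l1norm (A W) := by nlinarith
      calc β ^ 2 / (4 * γ ^ 4)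
          = (β * frobNorm W) ^ 2 / (4 * γ ^ 4 * frobNorm W ^ 2) := by field_simp
        _ ≤ (γ * l1norm (A W)) ^ 2 / (4 * γ ^ 4 * frobNorm W ^ 2) := by gcongr
        _ = (1 / (4 * γ ^ 2)) * l1norm (A W) ^ 2 / frobNorm W ^ 2 := by field_simp
    calc _ ≤ l1norm v / (β ^ 2 / (4 * γ ^ 4)) * β := by
          have hp := l1norm_nonneg v
          gcongr
          exact le_max_of_le_right hden
      _ = 4 * γ ^ 4 * l1norm v / β := by field_simp
  · rw [zero_mul]
    exact div_nonneg (mul_nonneg (by positivity) (l1norm_nonneg v)) hβ.le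

lemma l1norm_le_stepSize_mul {γ β : ℝ} (hγ : 1 ≤ γ) (v : Fin m → ℝ)
    {W : Matrix (Fin N₁) (Fin N₂) ℝ} (hW : W ≠ 0) (hWβ : frobNorm W ≤ β)
    (hAW : l1norm (A W) ≤ β * frobNorm W) :
    l1norm v ≤ stepSize γ A v W * β ^ 2 := by
  have hw := frobNorm_pos hW
  rw [stepSize, if_pos hW, div_mul_eq_mul_div,
    le_div_iff₀ (lt_max_of_lt_left (pow_pos hw 2))]
  refine mul_le_mul_of_nonneg_left (max_le (by gcongr) ?_) (l1norm_nonneg v)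
  have hγ2 : 1 / (4 * γ ^ 2) ≤ 1 :=
    div_le_one_of_le₀ (by nlinarith [one_le_pow₀ hγ (n := 2)]) (by positivity)
  rw [div_le_iff₀ (by positivity), ← mul_pow]
  calc 1 / (4 * γ ^ 2) * l1norm (A W) ^ 2 ≤ 1 * l1norm (A W) ^ 2 := by gcongr
    _ ≤ (β * frobNorm W) ^ 2 := by
        rw [one_mul]
        gcongr
        exact l1norm_nonneg _

lemma l1norm_sub_le_frobInner_adjoint
    (hadj : ∀ (u : Fin m → ℝ) (Z : Matrix (Fin N₁) (Fin N₂) ℝ),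
      frobInner (Astar u) Z = ∑ i, u i * A Z i)
    (Z : Matrix (Fin N₁) (Fin N₂) ℝ) (e : Fin m → ℝ) :
    l1norm (A Z + e) - l1norm e ≤ frobInner (Astar (sgnVec (A Z + e))) Z := by
  have hsplit : frobInner (Astar (sgnVec (A Z + e))) Z +
      ∑ i, sgnVec (A Z + e) i * e i = l1norm (A Z + e) := by
    rw [hadj, ← sum_sgnVec_mul_self, ← Finset.sum_add_distrib]
    exact Finset.sum_congr rfl fun i _ => (mul_add _ _ _).symm
  linarith [sum_sgnVec_mul_le (A Z + e) e]

lemma frobNorm_le_of_isBestRankApprox_adjoint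
    (hadj : ∀ (u : Fin m → ℝ) (Z : Matrix (Fin N₁) (Fin N₂) ℝ),
      frobInner (Astar u) Z = ∑ i, u i * A Z i)
    {k : ℕ} {β : ℝ} (hβ : 0 ≤ β) {v : Fin m → ℝ} {W : Matrix (Fin N₁) (Fin N₂) ℝ}
    (hW : IsBestRankApprox k (Astar (sgnVec v)) W) (hAW : l1norm (A W) ≤ β * frobNorm W) :
    frobNorm W ≤ β := by
  have hsq : frobNorm W ^ 2 ≤ β * frobNorm W := by
    rw [← hW.frobInner_eq_frobNorm_sq, hadj]
    exact (sum_sgnVec_mul_le _ _).trans hAW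
  rcases (frobNorm_nonneg W).eq_or_lt with hzero | hpos
  · rwa [← hzero]
  · exact le_of_mul_le_mul_right (by rwa [← sq]) hpos

lemma l1norm_sub_sub_le_frobInner
    (hadj : ∀ (u : Fin m → ℝ) (Z : Matrix (Fin N₁) (Fin N₂) ℝ),
      frobInner (Astar u) Z = ∑ i, u i * A Z i)
    {k ρ : ℕ} {γ α : ℝ} (hρ : 0 < ρ) (hγ : 0 < γ) (hα : 0 ≤ α) (hk : 400 * γ ^ 2 * ρ ≤ k)
    {Z W : Matrix (Fin N₁) (Fin N₂) ℝ} (hZ : Z.rank ≤ ρ) {e : Fin m → ℝ}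
    (hW : IsBestRankApprox k (Astar (sgnVec (A Z + e))) W) (hWα : frobNorm W ≤ γ * α) :
    l1norm (A Z + e) - l1norm e - α * frobNorm Z / 20 ≤ frobInner W Z := by
  have hZρ : (Z.rank : ℝ) ≤ ρ := Nat.cast_le.mpr hZ
  have hz := frobNorm_nonneg Z
  have htail : frobInner (Astar (sgnVec (A Z + e)) - W) Z ^ 2 ≤ (α * frobNorm Z / 20) ^ 2 := by
    refine le_of_mul_le_mul_left ?_ (show 0 < 400 * γ ^ 2 * ρ by positivity)
    calc 400 * γ ^ 2 * ρ * frobInner (Astar (sgnVec (A Z + e)) - W) Z ^ 2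
        ≤ k * frobInner (Astar (sgnVec (A Z + e)) - W) Z ^ 2 := by gcongr
      _ ≤ Z.rank * frobNorm W ^ 2 * frobNorm Z ^ 2 := hW.mul_sq_frobInner_sub_le Z
      _ ≤ ρ * (γ * α) ^ 2 * frobNorm Z ^ 2 := by
          gcongr
          exact frobNorm_nonneg W
      _ = 400 * γ ^ 2 * ρ * (α * frobNorm Z / 20) ^ 2 := by ring
  have hle := le_of_sq_le_sq htail (by positivity)
  rw [frobInner_sub_left] at hle
  linarith [l1norm_sub_le_frobInner_adjoint hadj Z e]

lemma frobNorm_sub_stepSize_smul_sq_le {γ β δ : ℝ} (hγ : 1 ≤ γ) (hβ : 0 < β) (hδ : 0 ≤ δ)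
    {v : Fin m → ℝ} {Z W : Matrix (Fin N₁) (Fin N₂) ℝ} (hWβ : frobNorm W ≤ β)
    (hAW : l1norm (A W) ≤ β * frobNorm W) (hδv : δ ≤ l1norm v)
    (hδW : l1norm v + δ ≤ 2 * frobInner W Z) :
    frobNorm (Z - stepSize γ A v W • W) ^ 2 ≤ frobNorm Z ^ 2 - (δ / β) ^ 2 := by
  by_cases hW : W = 0
  · have hinner : frobInner W Z = 0 := by simp [hW, frobInner]
    have hδ0 : δ = 0 := by linarith
    rw [hδ0, hW, smul_zero, sub_zero, zero_div, zero_pow two_ne_zero, sub_zero]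
  have hμ := stepSize_nonneg (A := A) γ v W
  have hμW := stepSize_mul_frobNorm_sq_le (A := A) γ v W
  have hμβ := l1norm_le_stepSize_mul hγ v hW hWβ hAW
  set μ := stepSize γ A v W
  have hdecrease : (δ / β) ^ 2 ≤ μ * δ := by
    rw [div_pow, div_le_iff₀ (by positivity)]
    nlinarith
  rw [frobNorm_sub_sq, frobInner_smul_right, frobInner_comm, frobNorm_smul, mul_pow, sq_abs]
  nlinarith [mul_le_mul_of_nonneg_left hδW hμ, mul_le_mul_of_nonneg_left hμW hμ]

-- Take `θ = 9 / (10 * γ)` in `√(1 - θ ^ 2) ≤ 1 - 40 / 81 * θ ^ 2`.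
lemma le_of_sq_le_sq_sub_sq {F z q c γ : ℝ} (hz : 0 ≤ z) (hc : 0 ≤ c) (hγ : 1 ≤ γ)
    (hq : 9 / 10 * z ≤ γ * (q + c)) (hF : F ^ 2 ≤ z ^ 2 - q ^ 2) :
    F ≤ (1 - 2 / (5 * γ ^ 2)) * z + 2 * c := by
  obtain ⟨θ, hθ⟩ : ∃ θ, θ = 9 / 10 / γ := ⟨_, rfl⟩
  have hθ0 : 0 ≤ θ := by rw [hθ]; positivity
  have hθ1 : θ ≤ 9 / 10 := by rw [hθ]; exact div_le_self (by norm_num) hγ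
  have hx : 2 / (5 * γ ^ 2) = 40 / 81 * θ ^ 2 := by rw [hθ]; field_simp; norm_num
  have hθq : θ * z - c ≤ q := by
    rw [hθ, sub_le_iff_le_add, div_mul_eq_mul_div, div_le_iff₀ (by linarith)]
    linarith
  have hqsq : (θ * z) ^ 2 - 2 * (θ * z) * c ≤ q ^ 2 := by
    rcases le_total c (θ * z) with hcz | hcz
    · nlinarith [pow_le_pow_left₀ (sub_nonneg.mpr hcz) hθq 2, sq_nonneg c]
    · nlinarith [sq_nonneg q, mul_nonneg hθ0 hz]
  rw [hx]
  have hR : 0 ≤ (1 - 40 / 81 * θ ^ 2) * z + 2 * c := by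
    have : 0 ≤ 1 - 40 / 81 * θ ^ 2 := by nlinarith
    positivity
  refine le_of_sq_le_sq ?_ hR
  nlinarith [mul_nonneg hc hz, mul_nonneg hθ0 hz, mul_nonneg hc (mul_nonneg hθ0 hz)]

lemma frobNorm_sub_stepSize_smul_le_of_noise_ge {γ α β : ℝ} (hγ : 1 ≤ γ) (hβ : 0 < β)
    (hβα : β ≤ γ * α) {Z W : Matrix (Fin N₁) (Fin N₂) ℝ} {e : Fin m → ℝ}
    (hnoise : 9 / 10 * α * frobNorm Z ≤ 3 * l1norm e) (hAZ : l1norm (A Z) ≤ β * frobNorm Z)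
    (hWβ : frobNorm W ≤ β) (hAW : α * frobNorm W ≤ l1norm (A W)) :
    frobNorm (Z - stepSize γ A (A Z + e) W • W) ≤ 21 * γ ^ 5 / β * l1norm e := by
  have he := l1norm_nonneg e
  have hγ0 : 0 < γ := by linarith
  have hz : β * frobNorm Z ≤ 10 / 3 * γ * l1norm e := by
    nlinarith [mul_le_mul_of_nonneg_right hβα (frobNorm_nonneg Z)]
  have hv : l1norm (A Z + e) ≤ 13 / 3 * γ * l1norm e := by
    nlinarith [l1norm_add_le (A Z) e]
  calc frobNorm (Z - stepSize γ A (A Z + e) W • W)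
      ≤ frobNorm Z + stepSize γ A (A Z + e) W * frobNorm W := by
        refine (frobNorm_sub_le _ _).trans_eq ?_
        rw [frobNorm_smul, abs_of_nonneg (stepSize_nonneg _ _ _)]
    _ ≤ frobNorm Z + 4 * γ ^ 4 * l1norm (A Z + e) / β := by
        gcongr
        exact stepSize_mul_frobNorm_le hγ0 hβ hβα _ hWβ hAW
    _ ≤ 10 / 3 * γ ^ 5 * l1norm e / β + 4 * γ ^ 4 * (13 / 3 * γ * l1norm e) / β := by
        refine add_le_add ?_ (by gcongr)
        rw [le_div_iff₀ hβ, mul_comm]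
        refine hz.trans ?_
        gcongr
        exact le_self_pow₀ hγ (by norm_num)
    _ = 62 / 3 * γ ^ 5 / β * l1norm e := by ring
    _ ≤ 21 * γ ^ 5 / β * l1norm e := by
        gcongr
        norm_num

lemma frobNorm_sub_stepSize_smul_le
    (hadj : ∀ (u : Fin m → ℝ) (Z : Matrix (Fin N₁) (Fin N₂) ℝ),
      frobInner (Astar u) Z = ∑ i, u i * A Z i)
    {k ρ : ℕ} {γ α β : ℝ} (hρ : 0 < ρ) (hk : 400 * γ ^ 2 * ρ ≤ k)
    (hα : 0 < α) (hαβ : α ≤ β) (hβα : β ≤ γ * α) (hA : RankRestrictedIsometry k α β A)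
    {Z W : Matrix (Fin N₁) (Fin N₂) ℝ} (hZ : Z.rank ≤ ρ) {e : Fin m → ℝ}
    (hW : IsBestRankApprox k (Astar (sgnVec (A Z + e))) W) :
    frobNorm (Z - stepSize γ A (A Z + e) W • W) ≤
      (1 - 2 / (5 * γ ^ 2)) * frobNorm Z + 21 * γ ^ 5 / β * l1norm e := by
  have hβ : 0 < β := hα.trans_le hαβ
  have hγ : 1 ≤ γ := by nlinarith
  have hρk : ρ ≤ k := by
    rw [← Nat.cast_le (α := ℝ)]
    nlinarith [one_le_pow₀ hγ (n := 2), Nat.cast_nonneg (α := ℝ) ρ]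
  obtain ⟨hAZα, hAZβ⟩ := hA Z (hZ.trans hρk)
  obtain ⟨hAWα, hAWβ⟩ := hA W hW.1
  have hWβ := frobNorm_le_of_isBestRankApprox_adjoint hadj hβ.le hW hAWβ
  have hinner := l1norm_sub_sub_le_frobInner hadj hρ (by linarith) hα.le hk hZ hW
    (hWβ.trans hβα)
  have hz := frobNorm_nonneg Z
  have he := l1norm_nonneg e
  have hγ5 := one_le_pow₀ hγ (n := 5)
  rcases le_total (3 * l1norm e) (9 / 10 * α * frobNorm Z) with hsmall | hlarge
  · have hvle := l1norm_le_l1norm_add (A Z) e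
    have hδv : 9 / 10 * α * frobNorm Z - 3 * l1norm e ≤ l1norm (A Z + e) := by
      nlinarith
    have hsq := frobNorm_sub_stepSize_smul_sq_le (Z := Z) hγ hβ (sub_nonneg.mpr hsmall) hWβ
      hAWβ hδv (by linarith)
    refine (le_of_sq_le_sq_sub_sq (c := 3 * l1norm e / β) hz (by positivity) hγ ?_ hsq).trans ?_
    · rw [← add_div, sub_add_cancel, ← mul_div_assoc, le_div_iff₀ hβ]
      nlinarith
    · rw [add_le_add_iff_left]
      calc 2 * (3 * l1norm e / β) = 6 * 1 / β * l1norm e := by ring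
        _ ≤ 21 * γ ^ 5 / β * l1norm e := by
            gcongr
            norm_num
  · have hcontract : 0 ≤ 1 - 2 / (5 * γ ^ 2) :=
      sub_nonneg.mpr (div_le_one_of_le₀ (by nlinarith [one_le_pow₀ hγ (n := 2)]) (by positivity))
    exact (frobNorm_sub_stepSize_smul_le_of_noise_ge hγ hβ hβα hlarge hAZβ hWβ hAWα).trans
      (le_add_of_nonneg_left (by positivity))

end GradientStep

section Contraction

variable {N₁ N₂ m : ℕ}

lemma contraction_factors_mul_le {γ β z ε : ℝ} (hγ : 1 ≤ γ) (hβ : 0 < β) (hz : 0 ≤ z)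
    (hε : 0 ≤ ε) :
    (1 + 1 / (8 * γ ^ 2)) * ((1 - 2 / (5 * γ ^ 2)) * z + 21 * γ ^ 5 / β * ε) ≤
      (1 - 1 / (4 * γ ^ 2)) * z + 24 * γ ^ 5 / β * ε := by
  have hγ2 := one_le_pow₀ hγ (n := 2)
  have hsignal : (1 + 1 / (8 * γ ^ 2)) * (1 - 2 / (5 * γ ^ 2)) ≤ 1 - 1 / (4 * γ ^ 2) := by
    rw [← sub_nonneg]
    have hgap : 1 - 1 / (4 * γ ^ 2) - (1 + 1 / (8 * γ ^ 2)) * (1 - 2 / (5 * γ ^ 2)) =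
        1 / (40 * γ ^ 2) + 1 / (20 * γ ^ 4) := by
      field_simp
      ring
    rw [hgap]
    positivity
  have hnoise : 1 + 1 / (8 * γ ^ 2) ≤ 9 / 8 := by
    have : 1 / (8 * γ ^ 2) ≤ 1 / 8 := by gcongr; linarith
    linarith
  have hγβ : 0 ≤ γ ^ 5 / β * ε := by positivity
  calc (1 + 1 / (8 * γ ^ 2)) * ((1 - 2 / (5 * γ ^ 2)) * z + 21 * γ ^ 5 / β * ε)
      = (1 + 1 / (8 * γ ^ 2)) * (1 - 2 / (5 * γ ^ 2)) * z +
          (1 + 1 / (8 * γ ^ 2)) * (21 * γ ^ 5 / β * ε) := by ring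
    _ ≤ (1 - 1 / (4 * γ ^ 2)) * z + 9 / 8 * (21 * γ ^ 5 / β * ε) := by gcongr
    _ ≤ (1 - 1 / (4 * γ ^ 2)) * z + 24 * γ ^ 5 / β * ε := by
        rw [mul_div_assoc, mul_div_assoc]
        nlinarith

lemma four_hundred_mul_sq_mul_add_le {r s t γ : ℝ} (hγ : 1 ≤ γ) (hr : 0 ≤ r)
    (hs : s = 100 * γ ^ 4 * r) (ht : t = 800 * γ ^ 12 * s) :
    400 * γ ^ 2 * (s + r) ≤ t := by
  have hrs : r ≤ s := by
    rw [hs]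
    nlinarith [one_le_pow₀ hγ (n := 4)]
  calc 400 * γ ^ 2 * (s + r) ≤ 400 * γ ^ 12 * (s + s) := by
        have hs0 := hr.trans hrs
        gcongr
        norm_num
    _ = t := by rw [ht]; ring

lemma contraction_bound_le {γ β z ε q : ℝ} (hγ : 1 ≤ γ) (hβ : 0 < β) (hz : 0 ≤ z)
    (hε : 0 ≤ ε) :
    (1 - 1 / (4 * γ ^ 2)) * z + 24 * γ ^ 5 / β * ε ≤
      (1 - (3 - 2 * √2) / (10 * γ ^ 2)) * z + 96 * (1 + √q) * γ ^ 8 / β * ε := by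
  have hsqrt : (3 - 2 * √2) / (10 * γ ^ 2) ≤ 1 / (4 * γ ^ 2) := by
    rw [div_le_div_iff₀ (by positivity) (by positivity)]
    nlinarith [Real.one_le_sqrt.mpr one_le_two, sq_nonneg γ]
  have hnoise : 24 * γ ^ 5 ≤ 96 * (1 + √q) * γ ^ 8 := by
    gcongr
    · linarith [Real.sqrt_nonneg q]
    · norm_num
  gcongr

theorem stmt2_general {r s t : ℕ} (hr : 0 < r) {γ : ℝ} (hs : 100 * γ ^ 4 * r ≤ s)
    (ht : 400 * γ ^ 2 * (s + r) ≤ t)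
    {A : Matrix (Fin N₁) (Fin N₂) ℝ →ₗ[ℝ] (Fin m → ℝ)}
    {Astar : (Fin m → ℝ) →ₗ[ℝ] Matrix (Fin N₁) (Fin N₂) ℝ}
    (hadj : ∀ (u : Fin m → ℝ) (Z : Matrix (Fin N₁) (Fin N₂) ℝ),
      frobInner (Astar u) Z = ∑ i, u i * A Z i)
    {α β : ℝ} (hα : 0 < α) (hαβ : α ≤ β) (hratio : β / α ≤ γ)
    (hA : RankRestrictedIsometry t α β A)
    {X : Matrix (Fin N₁) (Fin N₂) ℝ} (hX : X.rank ≤ r)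
    {e y : Fin m → ℝ} (hy : y = A X + e)
    {Xc : Matrix (Fin N₁) (Fin N₂) ℝ} (hXc : Xc.rank ≤ s)
    {W : Matrix (Fin N₁) (Fin N₂) ℝ}
    (hW : IsBestRankApprox t (Astar (sgnVec (y - A Xc))) W)
    {X' : Matrix (Fin N₁) (Fin N₂) ℝ}
    (hX' : IsBestRankApprox s (Xc + stepSize γ A (y - A Xc) W • W) X') :
    frobNorm (X - X') ≤
      (1 - 1 / (4 * γ ^ 2)) * frobNorm (X - Xc) + 24 * γ ^ 5 / β * l1norm e := by
  have hβ : 0 < β := hα.trans_le hαβ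
  have hγ : 1 ≤ γ := ((one_le_div hα).mpr hαβ).trans hratio
  have hresidual : y - A Xc = A (X - Xc) + e := by
    rw [hy, map_sub]
    abel
  rw [hresidual] at hW hX'
  have hrank : (X - Xc).rank ≤ s + r :=
    (matrix_rank_sub_le X Xc).trans (by omega)
  have hstep := frobNorm_sub_stepSize_smul_le hadj (Nat.add_pos_right s hr)
    (by exact_mod_cast ht) hα hαβ ((div_le_iff₀ hα).mp hratio) hA hrank hW
  rw [sub_sub] at hstep
  calc frobNorm (X - X')
      ≤ (1 + 1 / (8 * γ ^ 2)) *
          frobNorm (X - (Xc + stepSize γ A (A (X - Xc) + e) W • W)) :=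
        hX'.frobNorm_sub_le hr hγ hs hX
    _ ≤ (1 + 1 / (8 * γ ^ 2)) *
          ((1 - 2 / (5 * γ ^ 2)) * frobNorm (X - Xc) + 21 * γ ^ 5 / β * l1norm e) := by gcongr
    _ ≤ (1 - 1 / (4 * γ ^ 2)) * frobNorm (X - Xc) + 24 * γ ^ 5 / β * l1norm e :=
        contraction_factors_mul_le hγ hβ (frobNorm_nonneg _) (l1norm_nonneg _)

end Contraction

/-- One-step contraction: under the modified rank-restricted isometry property of order
t+s+r (s = 100γ⁴r, t = 800γ¹²s) with ratio β/α ≤ γ, for rank(X) ≤ r, y = 𝓐(X) + e,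
rank(X_c) ≤ s, W a best rank-t approximation of 𝓐*(sgn(y − 𝓐(X_c))), μ the stepsize, and
X' a best rank-s approximation of X_c + μW:
‖X − X'‖_F ≤ ρ‖X − X_c‖_F + d'‖e‖₁, with ρ := 1 − (3 − 2√2)/(10γ²),
ρ' := 1 + √(8r/(s+r)), d' := 96ρ'γ⁸/β. -/
theorem stmt2 {N₁ N₂ m : ℕ} (hN₁ : 0 < N₁) (hN₂ : 0 < N₂) (hm : 0 < m)
    (r s t : ℕ) (hr : 0 < r) (γ : ℝ) (hγ : 1 ≤ γ)
    (hs : (s : ℝ) = 100 * γ ^ 4 * r) (ht : (t : ℝ) = 800 * γ ^ 12 * s)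
    (hdim : t + s + r ≤ min N₁ N₂)
    (A : Matrix (Fin N₁) (Fin N₂) ℝ →ₗ[ℝ] (Fin m → ℝ))
    (Astar : (Fin m → ℝ) →ₗ[ℝ] Matrix (Fin N₁) (Fin N₂) ℝ)
    (hadj : ∀ (u : Fin m → ℝ) (Z : Matrix (Fin N₁) (Fin N₂) ℝ),
      frobInner (Astar u) Z = ∑ i, u i * A Z i)
    (α β : ℝ) (hα : 0 < α) (hαβ : α ≤ β) (hratio : β / α ≤ γ)
    (hRIP : ∀ Z : Matrix (Fin N₁) (Fin N₂) ℝ, Z.rank ≤ t + s + r →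
      α * frobNorm Z ≤ l1norm (A Z) ∧ l1norm (A Z) ≤ β * frobNorm Z)
    (X : Matrix (Fin N₁) (Fin N₂) ℝ) (hX : X.rank ≤ r)
    (e : Fin m → ℝ) (y : Fin m → ℝ) (hy : y = A X + e)
    (Xc : Matrix (Fin N₁) (Fin N₂) ℝ) (hXc : Xc.rank ≤ s)
    (W : Matrix (Fin N₁) (Fin N₂) ℝ)
    (hW : IsBestRankApprox t (Astar (sgnVec (y - A Xc))) W)
    (μ : ℝ)
    (hμ : μ = if W ≠ 0 then
        l1norm (y - A Xc) /
          max (frobNorm W ^ 2) ((1 / (4 * γ ^ 2)) * l1norm (A W) ^ 2 / frobNorm W ^ 2)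
      else 0)
    (X' : Matrix (Fin N₁) (Fin N₂) ℝ) (hX' : IsBestRankApprox s (Xc + μ • W) X') :
    frobNorm (X - X') ≤
      (1 - (3 - 2 * Real.sqrt 2) / (10 * γ ^ 2)) * frobNorm (X - Xc) +
        (96 * (1 + Real.sqrt (8 * (r : ℝ) / ((s : ℝ) + (r : ℝ)))) * γ ^ 8 / β) * l1norm e := by
  subst hμ
  refine (stmt2_general hr hs.ge
    (four_hundred_mul_sq_mul_add_le hγ (Nat.cast_nonneg r) hs ht) hadj hα hαβ hratio
    (fun Z hZ => hRIP Z (by omega)) hX hy hXc hW hX').trans ?_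
  exact contraction_bound_le hγ (hα.trans_le hαβ) (frobNorm_nonneg _) (l1norm_nonneg _)
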